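/- A topological space X is both functional Alexandroff and uniformizable if and only if the collection {V(a) : a ∈ X} is a partition of X into finite open subsets (each V(a) is open and finite, and any two sets V(x), V(y) are either disjoint or equal). -/

import Mathlib

open Set

variable {X : Type*}

/-- `V a` : the intersection of all open neighbourhoods of `a`. -/
def V [TopologicalSpace X] (a : X) : Set X :=
  ⋂₀ {U : Set X | IsOpen U ∧ a ∈ U}

/-- A topological space is uniformizable if its topology is induced by some
uniform structure. -/
def Uniformizable (X : Type*) [t : TopologicalSpace X] : Prop :=
  ∃ u : UniformSpace X, u.toTopologicalSpace = t

/-- `Vf f a = ⋃ₙ f⁻ⁿ(a)` : the union of the preimages of `{a}` under all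
iterates of `f` (including the 0-th iterate). -/
def Vf (f : X → X) (a : X) : Set X :=
  ⋃ n : ℕ, (f^[n]) ⁻¹' {a}

/-- The functional Alexandroff topology on `X` corresponding to `f`, generated
by the basis `{Vf f a : a ∈ X}`. -/
def funcAlexTop (f : X → X) : TopologicalSpace X :=
  TopologicalSpace.generateFrom {S : Set X | ∃ a : X, S = Vf f a}

/-- A topological space is functional Alexandroff if its topology is the
functional Alexandroff topology corresponding to some self-map. -/
def IsFunctionalAlexandroff (X : Type*) [t : TopologicalSpace X] : Prop :=
  ∃ f : X → X, t = funcAlexTop f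

/-!
Both conditions are about the specialization preorder, since `b ∈ V a` says `b ⤳ a`. A
uniformizable space is R₀, that is, this preorder is symmetric, and then the `V a` are the classes
of topologically indistinguishable points. In the functional Alexandroff topology of `f` we have
`b ⤳ a` iff some iterate of `f` sends `b` to `a`; as `x ⤳ f x`, symmetry makes every point periodic,
so each `V a` is a finite cycle of `f`. Conversely, a map permuting each finite block of the
partition cyclically generates the topology, and uniformizability comes from the separation
quotient, which is discrete.
-/

section MinimalNeighborhoods

open SeparationQuotient

variable [TopologicalSpace X] {a b : X} {U : Set X}

lemma mem_V : b ∈ V a ↔ b ⤳ a := by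
  simp only [V, mem_sInter, mem_ofPred_eq, and_imp, specializes_iff_forall_open]

lemma mem_V_self (a : X) : a ∈ V a :=
  mem_V.2 specializes_rfl

lemma V_eq_nhdsKer_singleton (a : X) : V a = nhdsKer {a} := by
  ext b
  rw [mem_V, mem_nhdsKer_singleton]

lemma V_subset_of_isOpen (hU : IsOpen U) (ha : a ∈ U) : V a ⊆ U :=
  sInter_subset_of_mem ⟨hU, ha⟩

lemma isTopologicalBasis_V (hV : ∀ a : X, IsOpen (V a)) :
    TopologicalSpace.IsTopologicalBasis {S : Set X | ∃ a, S = V a} := by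
  refine TopologicalSpace.isTopologicalBasis_of_isOpen_of_nhds ?_ fun a U ha hU =>
    ⟨V a, ⟨a, rfl⟩, mem_V_self a, V_subset_of_isOpen hU ha⟩
  rintro _ ⟨a, rfl⟩
  exact hV a

lemma alexandrovDiscrete_of_isOpen_V (hV : ∀ a : X, IsOpen (V a)) : AlexandrovDiscrete X := by
  refine alexandrovDiscrete_iff_nhds.2 fun a => ?_
  rw [← V_eq_nhdsKer_singleton]
  exact le_antisymm (Filter.le_principal_iff.2 ((hV a).mem_nhds (mem_V_self a)))
    ((nhds_basis_opens a).ge_iff.2 fun _ hU => V_subset_of_isOpen hU.2 hU.1)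

lemma V_eq_preimage_mk [R0Space X] (a : X) : V a = mk ⁻¹' {mk a} := by
  ext b
  rw [mem_V, specializes_iff_inseparable, mem_preimage, mem_singleton_iff, mk_eq_mk]

lemma r0Space_iff_V_eq_or_disjoint :
    R0Space X ↔ ∀ x y : X, V x = V y ∨ Disjoint (V x) (V y) := by
  constructor
  · intro _ x y
    simp only [V_eq_preimage_mk]
    obtain hxy | hxy := eq_or_ne (mk x) (mk y)
    · exact .inl (by rw [hxy])
    · exact .inr ((disjoint_singleton.2 hxy).preimage mk)
  · refine fun h => ⟨⟨fun x y hxy => ?_⟩⟩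
    have hV : V x = V y :=
      (h x y).resolve_right (not_disjoint_iff.2 ⟨x, mem_V_self x, mem_V.2 hxy⟩)
    exact mem_V.1 (hV ▸ mem_V_self y)

end MinimalNeighborhoods

section Uniformizable

variable [TopologicalSpace X]

lemma uniformizable_iff_completelyRegularSpace : Uniformizable X ↔ CompletelyRegularSpace X :=
  completelyRegularSpace_iff_exists_uniformSpace.symm

lemma Uniformizable.r0Space (h : Uniformizable X) : R0Space X :=
  have := uniformizable_iff_completelyRegularSpace.1 h
  inferInstance

lemma uniformizable_of_alexandrovDiscrete [AlexandrovDiscrete X] [R0Space X] : Uniformizable X := by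
  have : T1Space (SeparationQuotient X) := SeparationQuotient.t1Space_iff.2 ‹_›
  have : AlexandrovDiscrete (SeparationQuotient X) :=
    inferInstanceAs (AlexandrovDiscrete (Quotient _))
  exact uniformizable_iff_completelyRegularSpace.2
    SeparationQuotient.isInducing_mk.completelyRegularSpace

end Uniformizable

section Preimages

open Function

variable {f : X → X} {a b c : X}

lemma mem_Vf : b ∈ Vf f a ↔ ∃ n, f^[n] b = a := by
  simp only [Vf, mem_iUnion, mem_preimage, mem_singleton_iff]

lemma mem_Vf_self (f : X → X) (a : X) : a ∈ Vf f a :=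
  mem_Vf.2 ⟨0, rfl⟩

lemma mem_Vf_apply (f : X → X) (a : X) : a ∈ Vf f (f a) :=
  mem_Vf.2 ⟨1, rfl⟩

lemma mem_Vf_trans (hcb : c ∈ Vf f b) (hba : b ∈ Vf f a) : c ∈ Vf f a := by
  obtain ⟨n, rfl⟩ := mem_Vf.1 hcb
  obtain ⟨m, rfl⟩ := mem_Vf.1 hba
  exact mem_Vf.2 ⟨m + n, iterate_add_apply f m n c⟩

lemma finite_range_iterate (ha : a ∈ periodicPts f) : (range fun n => f^[n] a).Finite := by
  refine ((finite_Iio (minimalPeriod f a)).image fun n => f^[n] a).subset ?_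
  rintro _ ⟨n, rfl⟩
  exact ⟨n % minimalPeriod f a, Nat.mod_lt _ (minimalPeriod_pos_of_mem_periodicPts ha),
    iterate_mod_minimalPeriod_eq⟩

lemma finite_Vf_of_symm (h : ∀ a b, b ∈ Vf f a → a ∈ Vf f b) (a : X) : (Vf f a).Finite := by
  have ha : a ∈ periodicPts f := by
    obtain ⟨n, hn⟩ := mem_Vf.1 (h (f a) a (mem_Vf_apply f a))
    exact ⟨n + 1, n.succ_pos, hn⟩
  exact (finite_range_iterate ha).subset fun b hb => mem_Vf.1 (h a b hb)

lemma iterate_fiberwise {ι : Type*} {p : X → ι} {g : ι → X → X}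
    (hg : ∀ i, MapsTo (g i) (p ⁻¹' {i}) (p ⁻¹' {i})) (n : ℕ) (x : X) :
    (fun y => g (p y) y)^[n] x = (g (p x))^[n] x := by
  induction n with
  | zero => rfl
  | succ n ih =>
    have hp : p ((g (p x))^[n] x) = p x := (hg (p x)).iterate n rfl
    rw [iterate_succ_apply', iterate_succ_apply', ih, hp]

lemma exists_Vf_eq_preimage {ι : Type*} (p : X → ι) (hp : ∀ i, (p ⁻¹' {i}).Finite) :
    ∃ f : X → X, ∀ a, Vf f a = p ⁻¹' {p a} := by
  choose g hg _ using fun i => (hp i).countable.exists_cycleOn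
  refine ⟨fun x => g (p x) x, fun a => ext fun b => ?_⟩
  calc b ∈ Vf (fun x => g (p x) x) a
    _ ↔ a ∈ range fun n : ℕ => (g (p b) ^ n) b := by
      simp only [mem_Vf, iterate_fiberwise fun i => (hg i).1.mapsTo, mem_range,
        Equiv.Perm.iterate_eq_pow]
    _ ↔ a ∈ p ⁻¹' {p b} := by rw [(hg (p b)).range_pow (hp _) rfl]
    _ ↔ b ∈ p ⁻¹' {p a} := eq_comm

end Preimages

section FunctionalAlexandroff

open Topology

lemma isOpen_Vf (f : X → X) (a : X) : IsOpen[funcAlexTop f] (Vf f a) :=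
  TopologicalSpace.isOpen_generateFrom_of_mem ⟨a, rfl⟩

lemma specializes_generateFrom {g : Set (Set X)} {a b : X} :
    @Specializes X (.generateFrom g) b a ↔ ∀ s ∈ g, a ∈ s → b ∈ s := by
  let := TopologicalSpace.generateFrom g
  simpa only [specializes_iff_pure] using!
    TopologicalSpace.tendsto_nhds_generateFrom_iff (m := id) (f := pure b) (g := g) (b := a)

lemma specializes_funcAlexTop {f : X → X} {a b : X} :
    @Specializes X (funcAlexTop f) b a ↔ b ∈ Vf f a := by
  refine specializes_generateFrom.trans ⟨fun h => h _ ⟨a, rfl⟩ (mem_Vf_self f a), ?_⟩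
  rintro hba _ ⟨c, rfl⟩ hac
  exact mem_Vf_trans hba hac

variable [t : TopologicalSpace X]

lemma eq_funcAlexTop_iff {f : X → X} :
    t = funcAlexTop f ↔ ∀ a, IsOpen (V a) ∧ V a = Vf f a := by
  constructor
  · rintro rfl a
    let := funcAlexTop f
    have hV : V a = Vf f a := by
      ext b
      exact (@mem_V X (funcAlexTop f) a b).trans specializes_funcAlexTop
    exact ⟨hV ▸ isOpen_Vf f a, hV⟩
  · intro h
    rw [(isTopologicalBasis_V fun a => (h a).1).eq_generateFrom]
    simp only [funcAlexTop, (h _).2]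

lemma isFunctionalAlexandroff_iff_of_r0Space [R0Space X] :
    IsFunctionalAlexandroff X ↔ ∀ a : X, IsOpen (V a) ∧ (V a).Finite := by
  constructor
  · rintro ⟨f, hf⟩ a
    obtain ⟨hopen, hV⟩ := forall_and.1 (eq_funcAlexTop_iff.1 hf)
    have hsymm : ∀ a b, b ∈ Vf f a → a ∈ Vf f b := fun a b => by
      rw [← hV, ← hV, mem_V, mem_V]
      exact Specializes.symm
    exact ⟨hopen a, hV a ▸ finite_Vf_of_symm hsymm a⟩
  · intro h
    obtain ⟨f, hf⟩ := exists_Vf_eq_preimage (SeparationQuotient.mk : X → _)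
      (SeparationQuotient.surjective_mk.forall.2 fun a => V_eq_preimage_mk a ▸ (h a).2)
    exact ⟨f, eq_funcAlexTop_iff.2 fun a => ⟨(h a).1, (V_eq_preimage_mk a).trans (hf a).symm⟩⟩

end FunctionalAlexandroff

/-- `X` is both functional Alexandroff and uniformizable iff `{V a : a ∈ X}` is
a partition of `X` into finite open subsets (each `V a` is open and finite, and
any two such sets are either equal or disjoint). -/
theorem stmt11 [TopologicalSpace X] :
    (IsFunctionalAlexandroff X ∧ Uniformizable X) ↔
      ((∀ a : X, IsOpen (V a) ∧ (V a).Finite) ∧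
        ∀ x y : X, V x = V y ∨ Disjoint (V x) (V y)) := by
  constructor
  · rintro ⟨hf, hu⟩
    have := hu.r0Space
    exact ⟨isFunctionalAlexandroff_iff_of_r0Space.1 hf, r0Space_iff_V_eq_or_disjoint.1 this⟩
  · rintro ⟨hV, hpart⟩
    have := r0Space_iff_V_eq_or_disjoint.2 hpart
    have := alexandrovDiscrete_of_isOpen_V fun a => (hV a).1
    exact ⟨isFunctionalAlexandroff_iff_of_r0Space.2 hV, uniformizable_of_alexandrovDiscrete⟩
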